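/- arXiv:2309.06718 — 2 statements merged into one kernel-verified Lean document; each statement's English description precedes it below -/
import Mathlib

section
/- Let ι ≥ 1 be an integer, let λ₀,…,λ_{ι−2} be positive reals, and let h₀, h₁, …, h_{ι−1} : [0,∞) → ℝ be differentiable functions satisfying h_i(t) = h_{i−1}'(t) + λ_{i−1}·h_{i−1}(t) for all t ≥ 0 and all i ∈ {1,…,ι−1}. Suppose h_i(0) ≥ 0 for every i ∈ {0,…,ι−2} and h_{ι−1}(t) ≥ 0 for all t ≥ 0. Then h₀(t) ≥ 0 for all t ≥ 0. -/
/-- cascade / exponential-CBF argument of Theorem 2.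
With `h_i = h_{i−1}' + λ_{i−1} h_{i−1}` for `i ∈ {1,…,ι−1}` (phrased below with
`i = j + 1`, `j + 2 ≤ ι`), `λ₀,…,λ_{ι−2} > 0`, `h_i(0) ≥ 0` for `i ∈ {0,…,ι−2}`, and
`h_{ι−1}(t) ≥ 0` for all `t ≥ 0`, we get `h₀(t) ≥ 0` for all `t ≥ 0`. -/
theorem stmt6 (ι : ℕ) (hι : 1 ≤ ι)
    (lam : ℕ → ℝ) (hlam : ∀ j, j + 2 ≤ ι → 0 < lam j)
    (h h' : ℕ → ℝ → ℝ)
    (hdiff : ∀ i, i + 1 ≤ ι → ∀ t ≥ (0 : ℝ), HasDerivAt (h i) (h' i t) t)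
    (hrec : ∀ j, j + 2 ≤ ι → ∀ t ≥ (0 : ℝ), h (j + 1) t = h' j t + lam j * h j t)
    (h0 : ∀ i, i + 2 ≤ ι → 0 ≤ h i 0)
    (hlast : ∀ t ≥ (0 : ℝ), 0 ≤ h (ι - 1) t) :
    ∀ t ≥ (0 : ℝ), 0 ≤ h 0 t := by
  have step : ∀ j, j + 2 ≤ ι → (∀ t ≥ (0 : ℝ), 0 ≤ h (j + 1) t) →
      ∀ t ≥ (0 : ℝ), 0 ≤ h j t := by
    intro j hj hn t ht
    have hd : ∀ s ≥ (0 : ℝ), HasDerivAt (fun s => Real.exp (lam j * s) * h j s)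
        (Real.exp (lam j * s) * h (j + 1) s) s := by
      intro s hs
      have h1 : HasDerivAt (fun s : ℝ => lam j * s) (lam j) s := by
        simpa using (hasDerivAt_id s).const_mul (lam j)
      have h2 := h1.exp.mul (hdiff j (by omega) s hs)
      rw [hrec j hj s hs]
      exact h2.congr_deriv (by ring)
    have hm : MonotoneOn (fun s => Real.exp (lam j * s) * h j s) (Set.Ici 0) := by
      apply monotoneOn_of_deriv_nonneg (convex_Ici 0)
      · exact fun s hs => (hd s hs).continuousAt.continuousWithinAt
      · exact fun s hs =>
          (hd s (interior_subset hs)).differentiableAt.differentiableWithinAt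
      · intro s hs
        have hs0 : s ≥ 0 := interior_subset hs
        rw [(hd s hs0).deriv]
        exact mul_nonneg (Real.exp_pos _).le (hn s hs0)
    have h3 := hm (Set.mem_Ici.2 le_rfl) (Set.mem_Ici.2 ht) ht
    simp only [mul_zero, Real.exp_zero, one_mul] at h3
    exact nonneg_of_mul_nonneg_right ((h0 j hj).trans h3) (Real.exp_pos _)
  have key : ∀ k, k + 1 ≤ ι → ∀ t ≥ (0 : ℝ), 0 ≤ h (ι - 1 - k) t := by
    intro k
    induction k with
    | zero => intro _; simpa using hlast
    | succ k ih =>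
      intro hk
      apply step _ (by omega)
      have e : ι - 1 - (k + 1) + 1 = ι - 1 - k := by omega
      rw [e]
      exact ih (by omega)
  have := key (ι - 1) (by omega)
  simpa using this
end

section
/- Let κ, ω, ρ, λ > 0 be reals. Let h : [0,∞) → ℝ and z : [0,∞) → ℝⁿ be differentiable and suppose that for all t ≥ 0: (i) the function t ↦ (1/2)‖z(t)‖² is differentiable with derivative at most −κ‖z(t)‖² + ω, and (ii) h'(t) ≥ −λ·h(t) − ρ·(κ − λ/2)·‖z(t)‖² + ρ·ω. If h(0) ≥ (ρ/2)·‖z(0)‖², then h(t) ≥ (ρ/2)·‖z(t)‖² ≥ 0 for all t ≥ 0. -/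
/-- Lyapunov-coupled barrier argument at the core of Theorem 2's proof.
If `(1/2)‖z‖²` decays with rate `κ` up to `ω`, `h' ≥ −λh − ρ(κ − λ/2)‖z‖² + ρω`,
and `h(0) ≥ (ρ/2)‖z(0)‖²`, then `h(t) ≥ (ρ/2)‖z(t)‖² ≥ 0` for all `t ≥ 0`. -/
theorem stmt10 (n : ℕ) (κ ω ρ lam : ℝ)
    (hκ : 0 < κ) (hω : 0 < ω) (hρ : 0 < ρ) (hlam : 0 < lam)
    (h h' : ℝ → ℝ) (z : ℝ → EuclideanSpace ℝ (Fin n))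
    (hz : ∀ t ≥ (0 : ℝ), DifferentiableAt ℝ z t)
    (V' : ℝ → ℝ)
    (hVdiff : ∀ t ≥ (0 : ℝ), HasDerivAt (fun s => (1 / 2) * ‖z s‖ ^ 2) (V' t) t)
    (hV' : ∀ t ≥ (0 : ℝ), V' t ≤ -κ * ‖z t‖ ^ 2 + ω)
    (hhdiff : ∀ t ≥ (0 : ℝ), HasDerivAt h (h' t) t)
    (hh' : ∀ t ≥ (0 : ℝ), h' t ≥ -lam * h t - ρ * (κ - lam / 2) * ‖z t‖ ^ 2 + ρ * ω)
    (h0 : h 0 ≥ ρ / 2 * ‖z 0‖ ^ 2) :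
    ∀ t ≥ (0 : ℝ), h t ≥ ρ / 2 * ‖z t‖ ^ 2 ∧ ρ / 2 * ‖z t‖ ^ 2 ≥ 0 := by
  have hG : ∀ t ≥ (0 : ℝ), HasDerivAt
      (fun s => Real.exp (lam * s) * (h s - ρ * ((1 / 2) * ‖z s‖ ^ 2)))
      (Real.exp (lam * t) * (lam * 1) * (h t - ρ * ((1 / 2) * ‖z t‖ ^ 2))
        + Real.exp (lam * t) * (h' t - ρ * V' t)) t := by
    intro t ht
    exact (((hasDerivAt_id t).const_mul lam).exp).mul
      ((hhdiff t ht).sub ((hVdiff t ht).const_mul ρ))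
  have hmono : MonotoneOn
      (fun s => Real.exp (lam * s) * (h s - ρ * ((1 / 2) * ‖z s‖ ^ 2))) (Set.Ici 0) := by
    refine monotoneOn_of_deriv_nonneg (convex_Ici 0)
      (fun t ht => (hG t ht).continuousAt.continuousWithinAt) ?_ ?_
    · intro t ht
      exact (hG t (interior_subset ht)).differentiableAt.differentiableWithinAt
    · intro t ht
      have ht0 : t ≥ 0 := interior_subset ht
      rw [(hG t ht0).deriv]
      have h1 := mul_le_mul_of_nonneg_left (hV' t ht0) hρ.le
      have h2 := hh' t ht0
      have h3 : 0 ≤ lam * (h t - ρ * ((1 / 2) * ‖z t‖ ^ 2)) + (h' t - ρ * V' t) := by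
        linarith
      have h4 := mul_nonneg (Real.exp_pos (lam * t)).le h3
      linarith
  intro t ht
  refine ⟨?_, by positivity⟩
  have h5 := hmono (Set.mem_Ici.2 le_rfl) (Set.mem_Ici.2 ht) ht
  simp only [mul_zero, Real.exp_zero, one_mul] at h5
  have h6 : 0 ≤ h t - ρ * ((1 / 2) * ‖z t‖ ^ 2) := by
    refine nonneg_of_mul_nonneg_right ?_ (Real.exp_pos (lam * t))
    linarith
  linarith
end
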